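/- Let (A,a₀), (A',a₀') and (X,x₀) be pointed topological spaces, f : A → X a pointed continuous map, and g : A' → A a pointed homotopy equivalence (there is a pointed continuous g' : A → A' with g∘g' and g'∘g homotopic to the respective identities through pointed homotopies). Let m ≥ 1 and let α : S^m → X be continuous with α(s₀)=x₀. Then α admits a homotopy-Gottlieb extension for f if and only if α admits a homotopy-Gottlieb extension for f∘g. -/

import Mathlib

universe u v

open Metric unitInterval

attribute [local instance] Path.Homotopic.setoid
/-- `α : S → X` admits a homotopy-Gottlieb extension for `f : A → X`: a continuous
`F : A × S → X` such that `a ↦ F(a,s₀)` is pointed-homotopic to `f` and `s ↦ F(a₀,s)` is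
pointed-homotopic to `α`. -/
def HasHtpyGottliebExtS {A X S : Type*} [TopologicalSpace A] [TopologicalSpace X]
    [TopologicalSpace S] (a₀ : A) (s₀ : S) (f : C(A, X)) (α : C(S, X)) : Prop :=
  ∃ F : C(A × S, X),
    (F.comp ((ContinuousMap.id A).prodMk (ContinuousMap.const A s₀))).HomotopicRel f {a₀} ∧
    (F.comp ((ContinuousMap.const S a₀).prodMk (ContinuousMap.id S))).HomotopicRel α {s₀}

/-!
Extensions pull back along pointed maps. Pulling an extension for `f ∘ g` back along `g'` gives
one for `f ∘ g ∘ g'`, and the homotopy `g ∘ g' ≃ id` turns this into one for `f`.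
-/

theorem homotopicRel_precomp {A B X : Type*} [TopologicalSpace A] [TopologicalSpace B]
    [TopologicalSpace X] {f₀ f₁ : C(A, X)} {s : Set A} {t : Set B}
    (h : f₀.HomotopicRel f₁ s) (k : C(B, A)) (hk : Set.MapsTo k t s) :
    (f₀.comp k).HomotopicRel (f₁.comp k) t := by
  obtain ⟨H⟩ := h
  exact ⟨⟨H.toHomotopy.comp (.refl k), fun r _ hb => H.eq_fst r (hk hb)⟩⟩

namespace HasHtpyGottliebExtS

variable {A X S : Type*} [TopologicalSpace A] [TopologicalSpace X] [TopologicalSpace S]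
  {a₀ : A} {s₀ : S} {f : C(A, X)} {α : C(S, X)}

theorem of_homotopicRel {f' : C(A, X)} (h : HasHtpyGottliebExtS a₀ s₀ f α)
    (hff' : f.HomotopicRel f' {a₀}) : HasHtpyGottliebExtS a₀ s₀ f' α := by
  obtain ⟨F, hFf, hFα⟩ := h
  exact ⟨F, hFf.trans hff', hFα⟩

theorem precomp {B : Type*} [TopologicalSpace B] {b₀ : B}
    (h : HasHtpyGottliebExtS a₀ s₀ f α) (k : C(B, A)) (hk : k b₀ = a₀) :
    HasHtpyGottliebExtS b₀ s₀ (f.comp k) α := by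
  subst hk
  obtain ⟨F, hFf, hFα⟩ := h
  exact ⟨F.comp (k.prodMap (.id S)),
    homotopicRel_precomp hFf k (Set.mapsTo_singleton.mpr rfl), hFα⟩

end HasHtpyGottliebExtS

theorem statement15_general {A A' X S : Type*} [TopologicalSpace A] [TopologicalSpace A']
    [TopologicalSpace X] [TopologicalSpace S] {a₀ : A} {a₀' : A'} {s₀ : S}
    (f : C(A, X)) (g : C(A', A)) (g' : C(A, A')) (hg' : g' a₀ = a₀')
    (hgg' : (g.comp g').HomotopicRel (ContinuousMap.id A) {a₀}) (α : C(S, X)) :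
    HasHtpyGottliebExtS a₀ s₀ f α ↔ HasHtpyGottliebExtS a₀' s₀ (f.comp g) α := by
  have hg : g a₀' = a₀ := hg' ▸ hgg'.fst_eq_snd rfl
  have hf : ((f.comp g).comp g').HomotopicRel f {a₀} := hgg'.comp_continuousMap f
  exact ⟨fun h => h.precomp g hg, fun h => (h.precomp g' hg').of_homotopicRel hf⟩

/-- Invariance under pointed homotopy equivalence: if `g : A' → A` is a pointed homotopy
equivalence, then `α` admits a homotopy-Gottlieb extension for `f` iff it admits one for
`f ∘ g`. -/
theorem statement15 {A A' X : Type u} [TopologicalSpace A] [TopologicalSpace A']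
    [TopologicalSpace X] (a₀ : A) (a₀' : A') (x₀ : X)
    (f : C(A, X)) (hf : f a₀ = x₀)
    (g : C(A', A)) (hg : g a₀' = a₀) (g' : C(A, A')) (hg' : g' a₀ = a₀')
    (hgg' : (g.comp g').HomotopicRel (ContinuousMap.id A) {a₀})
    (hg'g : (g'.comp g).HomotopicRel (ContinuousMap.id A') {a₀'})
    (m : ℕ) (hm : 1 ≤ m)
    (s₀ : sphere (0 : EuclideanSpace ℝ (Fin (m + 1))) 1)
    (α : C(sphere (0 : EuclideanSpace ℝ (Fin (m + 1))) 1, X)) (hα : α s₀ = x₀) :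
    HasHtpyGottliebExtS a₀ s₀ f α ↔ HasHtpyGottliebExtS a₀' s₀ (f.comp g) α :=
  statement15_general f g g' hg' hgg' α
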